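/- Let R be a commutative ring, I ⊂ R an ideal, and C an R-module. Then the I-adic completion Λ_I(C) = lim_{n≥1} C/IⁿC is an s-contramodule for every s ∈ I. -/

import Mathlib

open CategoryTheory Opposite

/-!
The localization `A = R[s⁻¹]` has the telescope presentation `0 → R[X] → R[X] → A → 0`, with maps
multiplication by `sX - 1` and `X ↦ s⁻¹`. Hence `Ext¹(A, D) = 0` as soon as every sequence `g` in
`D` is of the form `g n = s • f (n + 1) - f n`. In an `I`-adic completion with `s ^ k ∈ I` the
series `f n = -∑ j, s ^ j • g (n + j)` solves this system: modulo `Iᵐ` only its first `k * m` terms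
survive. Moreover `Hom(A, D) = 0`, because the elements of `A` are infinitely `s`-divisible and `D`
is `I`-adically separated.
-/

universe u v w

section ExtVanishing

open Limits

variable {𝒜 : Type u} [Category.{v} 𝒜] [Abelian 𝒜]

theorem exists_kernel_ι_comp_eq_of_shortExact {S : ShortComplex 𝒜} (hS : S.ShortExact)
    [Projective S.X₂] {P Y : 𝒜} [Projective P] (p : P ⟶ S.X₃) [Epi p]
    (hY : ∀ α : S.X₁ ⟶ Y, ∃ β : S.X₂ ⟶ Y, S.f ≫ β = α) (φ : kernel p ⟶ Y) :
    ∃ ψ : P ⟶ Y, kernel.ι p ≫ ψ = φ := by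
  have := hS.mono_f
  have := hS.epi_g
  -- As in Schanuel's lemma, compare the two presentations through lifts of the identity of `S.X₃`.
  let a : S.X₂ ⟶ P := Projective.factorThru S.g p
  let b : P ⟶ S.X₂ := Projective.factorThru p S.g
  have ha : a ≫ p = S.g := Projective.factorThru_comp _ _
  have hb : b ≫ S.g = p := Projective.factorThru_comp _ _
  let a' : S.X₁ ⟶ kernel p := kernel.lift p (S.f ≫ a) (by simp [ha])
  let b' : kernel p ⟶ S.X₁ := hS.exact.lift (kernel.ι p ≫ b) (by simp [hb])
  let c : P ⟶ kernel p := kernel.lift p (𝟙 P - b ≫ a) (by simp [ha, hb])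
  have hb' : b' ≫ S.f = kernel.ι p ≫ b := hS.exact.lift_f _ _
  have id_eq : b' ≫ a' + kernel.ι p ≫ c = 𝟙 (kernel p) := by
    rw [← cancel_mono (kernel.ι p)]
    simp [a', c, reassoc_of% hb']
  obtain ⟨β, hβ⟩ := hY (a' ≫ φ)
  refine ⟨b ≫ β + c ≫ φ, ?_⟩
  calc kernel.ι p ≫ (b ≫ β + c ≫ φ)
      = (b' ≫ a' + kernel.ι p ≫ c) ≫ φ := by simp [← reassoc_of% hb', hβ]
    _ = φ := by rw [id_eq, Category.id_comp]

theorem exists_kernel_lift_comp_eq_of_cocycle {X Y : 𝒜} (P : ProjectiveResolution X)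
    (φ : P.complex.X 1 ⟶ Y) (hφ : P.complex.d 2 1 ≫ φ = 0) :
    ∃ φ' : kernel (P.π.f 0) ⟶ Y,
      kernel.lift (P.π.f 0) (P.complex.d 1 0) P.complex_d_comp_π_f_zero ≫ φ' = φ := by
  let τ := kernel.lift (P.π.f 0) (P.complex.d 1 0) P.complex_d_comp_π_f_zero
  have τ_comp : τ ≫ kernel.ι (P.π.f 0) = P.complex.d 1 0 := kernel.lift_ι _ _ _
  have : Epi τ := P.exact₀.epi_kernelLift
  let T : ShortComplex 𝒜 := .mk (P.complex.d 2 1) τ <| by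
    rw [← cancel_mono (kernel.ι (P.π.f 0)), Category.assoc, τ_comp, P.complex.d_comp_d,
      zero_comp]
  have hT : T.Exact := (ShortComplex.exact_iff_of_epi_of_isIso_of_mono
    ({ τ₁ := 𝟙 _, τ₂ := 𝟙 _, τ₃ := kernel.ι (P.π.f 0)
       comm₂₃ := (Category.id_comp _).trans τ_comp.symm } :
      T ⟶ .mk _ _ (P.complex.d_comp_d 2 1 0))).2 (P.exact_succ 0)
  have : Epi T.g := this
  exact ⟨hT.desc φ hφ, hT.g_desc φ hφ⟩

variable (R : Type w) [Ring R] [Linear R 𝒜] [EnoughProjectives 𝒜]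

theorem isZero_ext_succ_of_forall_exists_comp_eq {X : 𝒜} (P : ProjectiveResolution X) (Y : 𝒜)
    (n : ℕ) (h : ∀ φ : P.complex.X (n + 1) ⟶ Y, P.complex.d (n + 2) (n + 1) ≫ φ = 0 →
      ∃ ψ : P.complex.X n ⟶ Y, P.complex.d (n + 1) n ≫ ψ = φ) :
    IsZero (((Ext R 𝒜 (n + 1)).obj (op X)).obj Y) := by
  refine IsZero.of_iso ?_ (P.isoExt (n + 1) Y)
  rw [← HomologicalComplex.exactAt_iff_isZero_homology,
    HomologicalComplex.exactAt_iff' _ n (n + 1) (n + 2) (by simp) (by simp),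
    ShortComplex.moduleCat_exact_iff]
  exact h

theorem isZero_ext_one_of_shortExact {S : ShortComplex 𝒜} (hS : S.ShortExact) [Projective S.X₂]
    (Y : 𝒜) (hY : ∀ α : S.X₁ ⟶ Y, ∃ β : S.X₂ ⟶ Y, S.f ≫ β = α) :
    IsZero (((Ext R 𝒜 1).obj (op S.X₃)).obj Y) := by
  let P := ProjectiveResolution.of S.X₃
  refine isZero_ext_succ_of_forall_exists_comp_eq R P Y 0 fun φ hφ ↦ ?_
  obtain ⟨φ', rfl⟩ := exists_kernel_lift_comp_eq_of_cocycle P φ hφ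
  have : Projective (P.complex.X 0) := P.projective 0
  let p : P.complex.X 0 ⟶ S.X₃ := P.π.f 0
  have : Epi p := inferInstanceAs (Epi (P.π.f 0))
  obtain ⟨ψ, rfl⟩ := exists_kernel_ι_comp_eq_of_shortExact hS p hY φ'
  exact ⟨ψ, (kernel.lift_ι_assoc _ _ _ _).symm⟩

end ExtVanishing

section LocalizationAway

open Polynomial

variable {R : Type u} [CommRing R] (s : R) (A : Type v) [CommRing A] [Algebra R A]
  [IsLocalization.Away s A]

theorem smul_surjective_of_isLocalizationAway : Function.Surjective fun x : A ↦ s • x := fun x ↦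
  ⟨IsLocalization.Away.invSelf s * x, by
    simp only [Algebra.smul_def, ← mul_assoc, IsLocalization.Away.mul_invSelf, one_mul]⟩

theorem aeval_invSelf_eq_algEquiv_mk (p : R[X]) :
    haveI := IsLocalization.adjoin_inv s
    aeval (IsLocalization.Away.invSelf s : A) p =
      IsLocalization.algEquiv (Submonoid.powers s) (AdjoinRoot (C s * X - 1)) A
        (AdjoinRoot.mk _ p) := by
  have := IsLocalization.adjoin_inv s
  let e := IsLocalization.algEquiv (Submonoid.powers s) (AdjoinRoot (C s * X - 1)) A
  have root_eq : e (AdjoinRoot.root _) = IsLocalization.Away.invSelf s := by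
    refine (IsLocalization.Away.algebraMap_isUnit s).mul_left_cancel (b := e _) ?_
    rw [IsLocalization.Away.mul_invSelf, ← e.commutes, ← map_mul]
    exact (congrArg e (AdjoinRoot.root_isInv s)).trans (map_one e)
  rw [← root_eq, ← AdjoinRoot.aeval_eq]
  exact aeval_algHom_apply e.toAlgHom _ p

theorem aeval_invSelf_surjective :
    Function.Surjective (aeval (R := R) (IsLocalization.Away.invSelf s : A)) := by
  have := IsLocalization.adjoin_inv s
  rw [funext (aeval_invSelf_eq_algEquiv_mk s A)]
  exact (AlgEquiv.surjective _).comp AdjoinRoot.mk_surjective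

theorem aeval_invSelf_eq_zero_iff (p : R[X]) :
    aeval (IsLocalization.Away.invSelf s : A) p = 0 ↔ C s * X - 1 ∣ p := by
  rw [aeval_invSelf_eq_algEquiv_mk, EmbeddingLike.map_eq_zero_iff, AdjoinRoot.mk_eq_zero]

end LocalizationAway

section Telescope

open Polynomial

variable {R : Type u} [CommRing R]

theorem mulLeft_C_mul_X_sub_one_injective (s : R) :
    Function.Injective (LinearMap.mulLeft R (C s * X - 1)) := by
  have : C s * X - 1 ∈ nonZeroDivisors R[X] :=
    mem_nonzeroDivisors_of_coeff_mem 0 (by simpa using isUnit_one.neg.mem_nonZeroDivisors)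
  exact fun p q h ↦ (mul_cancel_left_mem_nonZeroDivisors this).1 h

theorem exists_linearMap_comp_mulLeft_eq {s : R} {D : Type w} [AddCommGroup D] [Module R D]
    (hD : ∀ g : ℕ → D, ∃ f : ℕ → D, ∀ n, s • f (n + 1) - f n = g n) (α : R[X] →ₗ[R] D) :
    ∃ β : R[X] →ₗ[R] D, β ∘ₗ LinearMap.mulLeft R (C s * X - 1) = α := by
  obtain ⟨f, hf⟩ := hD fun n ↦ α (monomial n 1)
  let β : R[X] →ₗ[R] D := (basisMonomials R).constr R f
  have hβ (n : ℕ) : β (monomial n 1) = f n := by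
    simpa only [coe_basisMonomials] using (basisMonomials R).constr_basis R f n
  refine ⟨β, (basisMonomials R).ext fun n ↦ ?_⟩
  have mul_monomial : (C s * X - 1) * monomial n 1 = s • monomial (n + 1) 1 - monomial n 1 := by
    rw [sub_mul, one_mul, mul_assoc, X_mul_monomial, smul_eq_C_mul]
  rw [coe_basisMonomials, LinearMap.comp_apply, LinearMap.mulLeft_apply, mul_monomial, map_sub,
    map_smul, hβ, hβ, hf]

/-- The presentation `0 → R[X] → R[X] → A → 0` of a localization `A` of `R` away from `s`, with maps
multiplication by `sX - 1` and evaluation at `s⁻¹`. It is the telescope of `R → R → ⋯` along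
multiplication by `s`, with the countable direct sums of copies of `R` encoded as `R[X]`. -/
noncomputable def telescope (s : R) (A : Type u) [CommRing A] [Algebra R A]
    [IsLocalization.Away s A] : ShortComplex (ModuleCat.{u} R) :=
  .mk (ModuleCat.ofHom (LinearMap.mulLeft R (C s * X - 1)))
    (ModuleCat.ofHom (aeval (IsLocalization.Away.invSelf s : A)).toLinearMap) <| by
      ext p
      exact (aeval_invSelf_eq_zero_iff s A _).2 (dvd_mul_right _ _)

theorem telescope_shortExact (s : R) (A : Type u) [CommRing A] [Algebra R A]
    [IsLocalization.Away s A] : (telescope s A).ShortExact where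
  exact := (ShortComplex.moduleCat_exact_iff _).2 fun p hp ↦
    ((aeval_invSelf_eq_zero_iff s A p).1 hp).imp fun _ h ↦ h.symm
  mono_f := (ModuleCat.mono_iff_injective _).2 (mulLeft_C_mul_X_sub_one_injective s)
  epi_g := (ModuleCat.epi_iff_surjective _).2 (aeval_invSelf_surjective s A)

theorem isZero_ext_one_localizationAway {s : R} (A : Type u) [CommRing A] [Algebra R A]
    [IsLocalization.Away s A] {D : Type u} [AddCommGroup D] [Module R D]
    (hD : ∀ g : ℕ → D, ∃ f : ℕ → D, ∀ n, s • f (n + 1) - f n = g n) :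
    Limits.IsZero (((Ext R (ModuleCat.{u} R) 1).obj (op (.of R A))).obj (.of R D)) := by
  have : Projective (telescope s A).X₂ := ModuleCat.projective_of_free (basisMonomials R)
  refine isZero_ext_one_of_shortExact R (telescope_shortExact s A) (.of R D) fun α ↦ ?_
  obtain ⟨β, hβ⟩ := exists_linearMap_comp_mulLeft_eq hD α.hom
  exact ⟨ModuleCat.ofHom β, ModuleCat.hom_ext hβ⟩

end Telescope

section AdicCompletion

variable {R : Type u} [CommRing R] {I : Ideal R} {s : R}

theorem linearMap_eq_zero_of_isHausdorff (hs : s ∈ I.radical) {M : Type v} [AddCommGroup M]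
    [Module R M] (hM : Function.Surjective fun x : M ↦ s • x) {D : Type w} [AddCommGroup D]
    [Module R D] [IsHausdorff I D] (f : M →ₗ[R] D) : f = 0 := by
  obtain ⟨k, hk⟩ := hs
  ext x
  refine IsHausdorff.haus ‹IsHausdorff I D› _ fun n ↦ SModEq.zero.2 ?_
  obtain ⟨y, rfl⟩ : ∃ y, s ^ (k * n) • y = x := by
    simpa only [smul_iterate] using hM.iterate (k * n) x
  rw [map_smul, pow_mul]
  exact Submodule.smul_mem_smul (Ideal.pow_mem_pow hk n) trivial

variable {C : Type v} [AddCommGroup C] [Module R C] {k : ℕ}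

theorem pow_smul_quotient_eq_zero_of_pow_mem (hk : s ^ k ∈ I) {n j : ℕ} (hj : k * n ≤ j)
    (x : C ⧸ (I ^ n • ⊤ : Submodule R C)) : s ^ j • x = 0 := by
  obtain ⟨c, rfl⟩ := Submodule.Quotient.mk_surjective _ x
  rw [← Submodule.Quotient.mk_smul, Submodule.Quotient.mk_eq_zero]
  have : s ^ j ∈ I ^ n :=
    Ideal.mem_of_dvd _ (pow_dvd_pow s hj) (pow_mul s k n ▸ Ideal.pow_mem_pow hk n)
  exact Submodule.smul_mem_smul this trivial

/-- The sum of the `I`-adically convergent series `∑ j, s ^ j • g j` in the completion, where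
`s ^ k ∈ I`. Modulo `I ^ n` the terms with `j ≥ k * n` vanish, so the series is cut off there. -/
noncomputable def adicPowerSum (hk : s ^ k ∈ I) (g : ℕ → AdicCompletion I C) :
    AdicCompletion I C :=
  ⟨fun n ↦ ∑ j ∈ Finset.range (k * n), s ^ j • (g j).val n, fun {m n} hmn ↦ by
    simp only [map_sum, map_smul, AdicCompletion.transitionMap_comp_eval_apply]
    refine (Finset.sum_subset (Finset.range_mono (Nat.mul_le_mul_left k hmn)) ?_).symm
    exact fun j _ hj ↦ pow_smul_quotient_eq_zero_of_pow_mem hk (by simpa using hj) _⟩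

theorem adicPowerSum_eq_add_smul (hk : s ^ k ∈ I) (g : ℕ → AdicCompletion I C) :
    adicPowerSum hk g = g 0 + s • adicPowerSum hk fun j ↦ g (j + 1) := by
  refine AdicCompletion.ext fun n ↦ ?_
  calc ∑ j ∈ Finset.range (k * n), s ^ j • (g j).val n
      = ∑ j ∈ Finset.range (k * n + 1), s ^ j • (g j).val n := by
        rw [Finset.sum_range_succ, pow_smul_quotient_eq_zero_of_pow_mem hk le_rfl, add_zero]
    _ = (g 0).val n + s • ∑ j ∈ Finset.range (k * n), s ^ j • (g (j + 1)).val n := by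
        simp only [Finset.sum_range_succ', Finset.smul_sum, smul_smul, ← pow_succ', pow_zero,
          one_smul, add_comm]

theorem exists_smul_succ_sub_eq (hs : s ∈ I.radical) (g : ℕ → AdicCompletion I C) :
    ∃ f : ℕ → AdicCompletion I C, ∀ n, s • f (n + 1) - f n = g n := by
  obtain ⟨k, hk⟩ := hs
  refine ⟨fun n ↦ -adicPowerSum hk fun j ↦ g (n + j), fun n ↦ ?_⟩
  simp only [adicPowerSum_eq_add_smul hk fun j ↦ g (n + j), add_zero, add_assoc, add_comm 1,
    smul_neg]
  abel

end AdicCompletion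

theorem adicCompletion_isContramodule_general {R : Type u} [CommRing R] (I : Ideal R)
    (C : Type u) [AddCommGroup C] [Module R C] {s : R} (hs : s ∈ I.radical)
    (A : Type u) [CommRing A] [Algebra R A] [IsLocalization.Away s A] :
    Subsingleton (A →ₗ[R] AdicCompletion I C) ∧
      Subsingleton (((Ext R (ModuleCat.{u} R) 1).obj (op (ModuleCat.of R A))).obj
        (ModuleCat.of R (AdicCompletion I C))) := by
  constructor
  · exact subsingleton_of_forall_eq 0 <|
      linearMap_eq_zero_of_isHausdorff hs (smul_surjective_of_isLocalizationAway s A)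
  · exact ModuleCat.isZero_iff_subsingleton.1 <|
      isZero_ext_one_localizationAway A (exists_smul_succ_sub_eq hs)

/-- For a commutative ring `R`, an ideal `I ⊆ R` and an `R`-module `C`,
the `I`-adic completion `Λ_I(C) = lim_n C/IⁿC` is an `s`-contramodule for every `s ∈ I`:
`Hom_R(R[s⁻¹], Λ_I(C)) = 0 = Ext¹_R(R[s⁻¹], Λ_I(C))`. -/
theorem adicCompletion_isContramodule
    (R : Type) [CommRing R] (I : Ideal R) (C : Type) [AddCommGroup C] [Module R C]
    (s : R) (hs : s ∈ I) :
    Subsingleton (Localization.Away s →ₗ[R] AdicCompletion I C) ∧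
      Subsingleton (((Ext R (ModuleCat R) 1).obj
        (op (ModuleCat.of R (Localization.Away s)))).obj
        (ModuleCat.of R (AdicCompletion I C))) :=
  adicCompletion_isContramodule_general I C (Ideal.le_radical hs) (Localization.Away s)
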